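/- Let e ∈ ℝ³ be a unit vector, δ ∈ (0,1), and f : ℝ³ → ℝ smooth compactly supported with support in the ball B(0,δ). Then lim_{r→∞} ∫_{ℝ³} f(x) · r² [ ∫₀^∞ j₀(r(e+x) − se) ds ] dx = q ∫_ℝ f(σe) dσ. -/

import Mathlib

open MeasureTheory Filter Topology Real Set Metric
open scoped InnerProductSpace

noncomputable section

local notation "ℝ³" => EuclideanSpace ℝ (Fin 3)

/-- Substitution `s = r (1 + σ)` in the integral of `j` along a line. -/
theorem integral_line_rescale (j : ℝ³ → ℝ) (e x : ℝ³) {r : ℝ} (hr : 0 < r) :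
    ∫ s : ℝ, j (r • (e + x) - s • e) = r * ∫ σ : ℝ, j (r • (x - σ • e)) := by
  have h1 : ∫ s : ℝ, j (r • (e + x) - s • e) = ∫ t : ℝ, j (r • x - t • e) := by
    rw [← integral_sub_right_eq_self (fun t : ℝ => j (r • x - t • e)) r]
    congr 1; ext s; congr 1; module
  have h2 : ∫ σ : ℝ, j (r • (x - σ • e)) = ∫ σ : ℝ, j (r • x - (r * σ) • e) := by
    congr 1; ext s; congr 1; module
  rw [h1, h2, Measure.integral_comp_mul_left (fun t : ℝ => j (r • x - t • e)) r,
    abs_of_pos (inv_pos.2 hr), smul_eq_mul, mul_inv_cancel_left₀ hr.ne']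

/-- Substitution `y = r (x - a)` in a volume integral. -/
theorem integral_mul_comp_rescale (f j : ℝ³ → ℝ) (a : ℝ³) {r : ℝ} (hr : 0 < r) :
    r ^ 3 * ∫ x : ℝ³, f x * j (r • (x - a)) = ∫ y : ℝ³, f (r⁻¹ • y + a) * j y := by
  have h1 : ∫ x : ℝ³, f x * j (r • (x - a)) = ∫ x : ℝ³, f (r⁻¹ • (r • x) + a) * j (r • x) := by
    rw [← integral_sub_right_eq_self (fun x : ℝ³ => f (r⁻¹ • (r • x) + a) * j (r • x)) a]
    congr 1; ext x; rw [inv_smul_smul₀ hr.ne', sub_add_cancel]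
  rw [h1, Measure.integral_comp_smul volume (fun y : ℝ³ => f (r⁻¹ • y + a) * j y) r,
    finrank_euclideanSpace_fin, abs_of_pos (by positivity), smul_eq_mul,
    mul_inv_cancel_left₀ (by positivity)]

/-- For large `r` the flux is the integral over the axis of `f` smeared with `j` at scale `1/r`. -/
theorem flux_eq_integral_smeared (j f : ℝ³ → ℝ) (hj : Continuous j) (hf : Continuous f)
    (e : ℝ³) (he : ‖e‖ = 1) {δ R r : ℝ} (hr : 0 < r) (hrR : R < r * (1 - δ))
    (hjR : ∀ y, j y ≠ 0 → ‖y‖ ≤ R) (hfδ : ∀ x, f x ≠ 0 → ‖x‖ < δ) :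
    ∫ x : ℝ³, f x * (r ^ 2 * ∫ s in Ioi (0 : ℝ), j (r • (e + x) - s • e)) =
      ∫ σ : ℝ, ∫ y : ℝ³, f (r⁻¹ • y + σ • e) * j y := by
  have hline : ∀ x, f x * (r ^ 2 * ∫ s in Ioi (0 : ℝ), j (r • (e + x) - s • e)) =
      r ^ 3 * ∫ σ : ℝ, f x * j (r • (x - σ • e)) := by
    intro x
    by_cases hx : f x = 0
    · simp [hx]
    rw [setIntegral_eq_integral_of_forall_compl_eq_zero, integral_line_rescale j e x hr,
      integral_const_mul]
    · ring
    intro s hs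
    by_contra hne
    have hs' : s ≤ 0 := by simpa using hs
    have h1 := hjR _ hne
    have h2 := hfδ x hx
    have h3 : ‖(r - s) • e‖ ≤ ‖r • (e + x) - s • e‖ + ‖r • x‖ := by
      have : (r - s) • e = (r • (e + x) - s • e) - r • x := by module
      rw [this]; exact norm_sub_le _ _
    rw [norm_smul, norm_smul, he, Real.norm_of_nonneg hr.le,
      Real.norm_of_nonneg (by linarith)] at h3
    nlinarith [mul_lt_mul_of_pos_left h2 hr]
  simp_rw [hline]
  rw [integral_const_mul, integral_integral_swap_of_hasCompactSupport, ← integral_const_mul]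
  · congr 1; ext σ
    exact integral_mul_comp_rescale f j (σ • e) hr
  · simp only [Function.uncurry_def]
    fun_prop
  · refine HasCompactSupport.intro
      ((isCompact_closedBall (0 : ℝ³) δ).prod (isCompact_closedBall (0 : ℝ) (δ + R / r))) ?_
    rintro ⟨x, σ⟩ hnot
    by_contra hne
    apply hnot
    simp only [Function.uncurry_apply_pair] at hne
    have h1 := hjR _ (right_ne_zero_of_mul hne)
    have h2 := hfδ x (left_ne_zero_of_mul hne)
    rw [norm_smul, Real.norm_of_nonneg hr.le, mul_comm, ← le_div_iff₀ hr] at h1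
    have h3 : ‖σ • e‖ ≤ ‖x‖ + ‖x - σ • e‖ := by
      simpa using norm_sub_le x (x - σ • e)
    rw [norm_smul, he, mul_one] at h3
    simp only [mem_prod, mem_closedBall_zero_iff]
    exact ⟨h2.le, by linarith⟩

/-- The integral along the axis of `f` smeared at scale `1/r` tends to that of `f`. -/
theorem tendsto_integral_smeared (j f : ℝ³ → ℝ) (hj : Integrable j) (hf : Continuous f)
    (hfc : HasCompactSupport f) (e : ℝ³) (he : ‖e‖ = 1) {δ R : ℝ}
    (hjR : ∀ y, j y ≠ 0 → ‖y‖ ≤ R) (hfδ : ∀ x, f x ≠ 0 → ‖x‖ < δ) :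
    Tendsto (fun r : ℝ => ∫ σ : ℝ, ∫ y : ℝ³, f (r⁻¹ • y + σ • e) * j y) atTop
      (𝓝 ((∫ x : ℝ³, j x) * ∫ σ : ℝ, f (σ • e))) := by
  obtain ⟨C, hC⟩ := hfc.exists_bound_of_continuous hf
  have hbound : ∀ (r σ : ℝ) (y : ℝ³), ‖f (r⁻¹ • y + σ • e) * j y‖ ≤ C * ‖j y‖ := fun r σ y => by
    rw [norm_mul]
    exact mul_le_mul_of_nonneg_right (hC _) (norm_nonneg _)
  have hmeas : ∀ r : ℝ, AEStronglyMeasurable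
      (fun p : ℝ × ℝ³ => f (r⁻¹ • p.2 + p.1 • e) * j p.2) (volume.prod volume) := fun r =>
    (by fun_prop : Continuous fun p : ℝ × ℝ³ => f (r⁻¹ • p.2 + p.1 • e)).aestronglyMeasurable.mul
      hj.aestronglyMeasurable.comp_snd
  rw [← integral_const_mul]
  refine tendsto_integral_filter_of_dominated_convergence
    ((closedBall (0 : ℝ) (δ + R)).indicator fun _ => ∫ y, C * ‖j y‖) ?_ ?_ ?_ ?_
  · exact .of_forall fun r => (hmeas r).integral_prod_right'
  · filter_upwards [eventually_ge_atTop 1] with r hr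
    refine .of_forall fun σ => ?_
    by_cases hσ : σ ∈ closedBall (0 : ℝ) (δ + R)
    · rw [indicator_of_mem hσ]
      exact norm_integral_le_of_norm_le (hj.norm.const_mul C) (.of_forall (hbound r σ))
    · rw [indicator_of_notMem hσ, norm_le_zero_iff]
      refine integral_eq_zero_of_ae (.of_forall fun y => ?_)
      by_contra hne
      apply hσ
      have h1 := hjR _ (right_ne_zero_of_mul hne)
      have h2 := hfδ _ (left_ne_zero_of_mul hne)
      have h3 : ‖σ • e‖ ≤ ‖r⁻¹ • y + σ • e‖ + ‖r⁻¹ • y‖ := by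
        simpa using norm_sub_le (r⁻¹ • y + σ • e) (r⁻¹ • y)
      have h4 : ‖r⁻¹ • y‖ ≤ ‖y‖ := by
        rw [norm_smul, Real.norm_of_nonneg (by positivity)]
        exact mul_le_of_le_one_left (norm_nonneg _) (inv_le_one_of_one_le₀ hr)
      rw [norm_smul, he, mul_one] at h3
      rw [mem_closedBall_zero_iff]
      linarith
  · exact (integrable_indicator_iff measurableSet_closedBall).2
      (integrableOn_const (isCompact_closedBall _ _).measure_lt_top.ne)
  · refine .of_forall fun σ => ?_
    rw [mul_comm, ← integral_const_mul]
    refine tendsto_integral_filter_of_dominated_convergence (fun y => C * ‖j y‖) ?_ ?_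
      (hj.norm.const_mul C) ?_
    · exact .of_forall fun r =>
        (by fun_prop : Continuous fun y : ℝ³ => f (r⁻¹ • y + σ • e)).aestronglyMeasurable.mul
          hj.aestronglyMeasurable
    · exact .of_forall fun r => .of_forall (hbound r σ)
    · refine .of_forall fun y => Tendsto.mul_const _ ((hf.tendsto _).comp ?_)
      simpa using ((tendsto_inv_atTop_zero (𝕜 := ℝ)).smul_const y).add_const (σ • e)

/-- The axial-gauge flux in the direction of the gauge axis:
`lim_{r→∞} ∫ f(x) r² ∫₀^∞ j₀(r(e+x) − se) ds dx = q ∫ f(σe) dσ`. -/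
theorem stmt_7 (j₀ : ℝ³ → ℝ) (hj : ContDiff ℝ (⊤ : ℕ∞) j₀) (hjc : HasCompactSupport j₀)
    (e : ℝ³) (he : ‖e‖ = 1) (δ : ℝ) (hδ : δ ∈ Ioo (0 : ℝ) 1)
    (f : ℝ³ → ℝ) (hf : ContDiff ℝ (⊤ : ℕ∞) f) (hfc : HasCompactSupport f)
    (hsupp : Function.support f ⊆ Metric.ball (0 : ℝ³) δ) :
    Tendsto (fun r : ℝ => ∫ x : ℝ³,
        f x * (r ^ 2 * ∫ s in Ioi (0 : ℝ), j₀ (r • (e + x) - s • e)))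
      atTop (𝓝 ((∫ x : ℝ³, j₀ x) * ∫ σ : ℝ, f (σ • e))) := by
  obtain ⟨R, hR⟩ := hjc.isBounded.exists_norm_le
  have hjR : ∀ y, j₀ y ≠ 0 → ‖y‖ ≤ R := fun y hy => hR y (subset_tsupport _ hy)
  have hfδ : ∀ x, f x ≠ 0 → ‖x‖ < δ := fun x hx => mem_ball_zero_iff.1 (hsupp hx)
  refine (tendsto_integral_smeared j₀ f (hj.continuous.integrable_of_hasCompactSupport hjc)
    hf.continuous hfc e he hjR hfδ).congr' ?_
  filter_upwards [eventually_gt_atTop 0, eventually_gt_atTop (R / (1 - δ))] with r hr hrR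
  rw [div_lt_iff₀ (sub_pos.2 hδ.2)] at hrR
  exact (flux_eq_integral_smeared j₀ f hj.continuous hf.continuous e he hr hrR hjR hfδ).symm
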